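/- Let P and Q be probability measures on X such that φ is Bochner integrable with respect to both, with mean embeddings μ_P := ∫ φ dP and μ_Q := ∫ φ dQ satisfying μ_P ≠ μ_Q. Fix x ∈ X, and for ε ∈ [0,1) let Q_ε := (1−ε)Q + εδ_x, whose mean embedding equals (1−ε)μ_Q + εφ(x). Then the one-sided limit defining the distributional influence IF_MMD(x; P, Q) := −lim_{ε→0⁺} (MMD(P, Q_ε) − MMD(P, Q))/ε exists and equals (⟨μ_P, φ(x)⟩ − ⟨μ_Q, φ(x)⟩ − ⟨μ_P, μ_Q⟩ + ‖μ_Q‖²)/‖μ_P − μ_Q‖. In particular, since ⟨μ_P, φ(x)⟩ = ∫ k(x', x) dP(x') and ⟨μ_Q, φ(x)⟩ = ∫ k(x', x) dQ(x'), the influence equals, up to an additive constant independent of x and division by the positive constant MMD(P, Q), the quantity E_{x'∼P}[k(x', x)] − E_{x'∼Q}[k(x', x)]. -/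

import Mathlib

open MeasureTheory Filter Topology
open scoped ENNReal RealInnerProductSpace

/-- The norm along an affine line has derivative `⟪d, v⟫ / ‖d‖` at a nonzero base point `d`. -/
theorem hasDerivAt_norm_add_smul {H : Type*} [NormedAddCommGroup H] [InnerProductSpace ℝ H]
    {d : H} (hd : d ≠ 0) (v : H) :
    HasDerivAt (fun t : ℝ => ‖d + t • v‖) (⟪d, v⟫ / ‖d‖) 0 := by
  have hline : HasDerivAt (fun t : ℝ => d + t • v) v 0 := by
    simpa using ((hasDerivAt_id (0 : ℝ)).smul_const v).const_add d
  have hsqrt := hline.norm_sq.sqrt (by simpa using hd)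
  simp only [Real.sqrt_sq (norm_nonneg _), zero_smul, add_zero] at hsqrt
  rwa [mul_div_mul_left _ _ two_ne_zero] at hsqrt

/-- Taking the inner product with a fixed vector on the right commutes with the
Bochner integral. -/
theorem inner_integral_left {X H : Type*} [MeasurableSpace X] [NormedAddCommGroup H]
    [InnerProductSpace ℝ H] [CompleteSpace H] {μ : Measure X} {φ : X → H}
    (hφ : Integrable φ μ) (h : H) :
    ⟪∫ x, φ x ∂μ, h⟫ = ∫ x, ⟪φ x, h⟫ ∂μ := by
  simp only [real_inner_comm h]
  exact (integral_inner hφ h).symm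

/-- The one-sided limit defining the distributional influence for MMD exists
and has the stated closed form, which up to constants equals the kernel expectation gap. -/
theorem mmd_influence_closed_form
    {X : Type*} [MeasurableSpace X]
    {H : Type*} [NormedAddCommGroup H] [InnerProductSpace ℝ H] [CompleteSpace H]
    [MeasurableSpace H] [BorelSpace H]
    (φ : X → H) (hφ : Measurable φ) (C : ℝ) (hC : ∀ x, ‖φ x‖ ≤ C)
    (P Q : Measure X) [IsProbabilityMeasure P] [IsProbabilityMeasure Q]
    (hPint : Integrable φ P) (hQint : Integrable φ Q)
    (μP μQ : H) (hμP : μP = ∫ x', φ x' ∂P) (hμQ : μQ = ∫ x', φ x' ∂Q)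
    (hne : μP ≠ μQ) (x : X)
    (Qe : ℝ → Measure X)
    (hQe : ∀ ε ∈ Set.Ico (0 : ℝ) 1,
      Qe ε = ENNReal.ofReal (1 - ε) • Q + ENNReal.ofReal ε • Measure.dirac x)
    (hQeEmb : ∀ ε ∈ Set.Ico (0 : ℝ) 1,
      (∫ x', φ x' ∂(Qe ε)) = (1 - ε) • μQ + ε • φ x) :
    (Tendsto
      (fun ε : ℝ =>
        -((‖(∫ x', φ x' ∂P) - ∫ x', φ x' ∂(Qe ε)‖ - ‖μP - μQ‖) / ε))
      (𝓝[>] (0 : ℝ))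
      (𝓝 ((⟪μP, φ x⟫ - ⟪μQ, φ x⟫ - ⟪μP, μQ⟫ + ‖μQ‖ ^ 2) / ‖μP - μQ‖)))
    ∧ ⟪μP, φ x⟫ = ∫ x', ⟪φ x', φ x⟫ ∂P
    ∧ ⟪μQ, φ x⟫ = ∫ x', ⟪φ x', φ x⟫ ∂Q := by
  refine ⟨?_, hμP ▸ inner_integral_left hPint _, hμQ ▸ inner_integral_left hQint _⟩
  have hd : μP - μQ ≠ 0 := sub_ne_zero.mpr hne
  have hval : (⟪μP, φ x⟫ - ⟪μQ, φ x⟫ - ⟪μP, μQ⟫ + ‖μQ‖ ^ 2) / ‖μP - μQ‖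
      = -(⟪μP - μQ, μQ - φ x⟫ / ‖μP - μQ‖) := by
    rw [← neg_div, inner_sub_left, inner_sub_right, inner_sub_right,
      real_inner_self_eq_norm_sq]
    ring
  rw [hval]
  refine ((hasDerivAt_norm_add_smul hd (μQ - φ x)).tendsto_slope_zero_right.neg).congr' ?_
  filter_upwards [Ioo_mem_nhdsGT (zero_lt_one' ℝ)] with ε hε
  have hdiff : μP - ((1 - ε) • μQ + ε • φ x) = μP - μQ + ε • (μQ - φ x) := by module
  rw [← hμP, hQeEmb ε ⟨hε.1.le, hε.2⟩, hdiff]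
  simp [div_eq_inv_mul]
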